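/- arXiv:1003.3075 — 2 statements merged into one kernel-verified Lean document; each statement's English description precedes it below -/
import Mathlib

section
/- For all positive integers p and s, the Fuss-Catalan number FC^(s)_p = (1/(sp+1)) * binomial(sp+p, p) equals the number of s-chains in the lattice of non-crossing partitions of [p], i.e. the number of tuples (σ₁, ..., σ_s) of non-crossing partitions of {1,...,p} with σ₁ ≤ σ₂ ≤ ... ≤ σ_s in the refinement order. -/
open Equiv Finset MeasureTheory

/-- A finpartition of `Fin n` is non-crossing if there are no `a < b < c < d` with
`a, c` in one block and `b, d` in another, distinct block. -/
def IsNonCrossing {n : ℕ} (P : Finpartition (Finset.univ : Finset (Fin n))) : Prop :=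
  ¬ ∃ (a b c d : Fin n) (X Y : Finset (Fin n)), X ∈ P.parts ∧ Y ∈ P.parts ∧ X ≠ Y ∧
      a < b ∧ b < c ∧ c < d ∧ a ∈ X ∧ c ∈ X ∧ b ∈ Y ∧ d ∈ Y

/-- The minimal number of transpositions whose product is `σ`. -/
noncomputable def permLength {n : ℕ} (σ : Equiv.Perm (Fin n)) : ℕ :=
  sInf {k | ∃ l : List (Equiv.Perm (Fin n)), (∀ τ ∈ l, τ.IsSwap) ∧ l.prod = σ ∧ l.length = k}

/-- The number of cycles of `σ`, counting fixed points as cycles (= number of orbits). -/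
def cycleCount {n : ℕ} (σ : Equiv.Perm (Fin n)) : ℕ :=
  Multiset.card σ.cycleType + (n - σ.support.card)

/-- The lattice of non-crossing partitions of `{1,…,p}`. -/
abbrev NCP (p : ℕ) := {P : Finpartition (Finset.univ : Finset (Fin p)) // IsNonCrossing P}

/-!
A non-crossing partition of `[n]` is determined by the map sending each point to the largest element
of its block, and the maps that arise are exactly those for which the intervals `[x, m x]` are
nested; refinement `P ≤ Q` becomes `m_Q ∘ m_P = m_Q`. Pad a chain to
`⊥ = c₀ ≤ c₁ ≤ ⋯ ≤ c_s ≤ c_{s+1} = ⊤`. If `0` and the last point lie in one block of `c_{k+1}`, cut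
`[n]` just after the largest element `j` of the block of `0` in `c_k`: the chain is determined by
its traces on the two pieces, since up to level `k` no block crosses the cut, and from level `k + 1`
on only the block of `j` does, being joined to the block of the last point. Hence the chains for
which `0` and the last point meet at level `k` have generating function `Z ^ k`, where `Z` counts
all chains, and as they always meet at level `s + 1`, `Z = 1 + X * Z ^ (s + 1)`. This equation
determines the coefficients of `Z` through Pascal's rule.
-/

section BlockMax

variable {α : Type*} [LinearOrder α] [Fintype α] (P Q : Finpartition (univ : Finset α))

/-- The largest element of the block of `P` containing `x`. -/
def blockMax (x : α) : α := (P.part x).max' (by simp)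

lemma blockMax_mem_part (x : α) : blockMax P x ∈ P.part x := max'_mem _ _

lemma le_blockMax (x : α) : x ≤ blockMax P x := le_max' _ _ (by simp)

lemma part_blockMax (x : α) : P.part (blockMax P x) = P.part x :=
  P.part_eq_of_mem (by simp) (blockMax_mem_part P x)

lemma blockMax_eq_blockMax_iff {x y : α} : blockMax P x = blockMax P y ↔ P.part x = P.part y := by
  refine ⟨fun h => ?_, fun h => by simp only [blockMax, h]⟩
  rw [← part_blockMax P x, h, part_blockMax]

lemma le_iff_blockMax_blockMax : P ≤ Q ↔ ∀ x, blockMax Q (blockMax P x) = blockMax Q x := by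
  constructor
  · intro h x
    obtain ⟨c, hc, hle⟩ := h (P.part_mem.2 (mem_univ x))
    rw [blockMax_eq_blockMax_iff, Q.part_eq_of_mem hc (hle (blockMax_mem_part P x)),
      Q.part_eq_of_mem hc (hle (P.mem_part (mem_univ x)))]
  · intro h b hb
    obtain ⟨x, hx⟩ := P.nonempty_of_mem_parts hb
    refine ⟨Q.part x, by simp, fun y hy => ?_⟩
    have hP : blockMax P y = blockMax P x := by
      rw [blockMax_eq_blockMax_iff, P.part_eq_of_mem hb hx, P.part_eq_of_mem hb hy]
    have hQ : blockMax Q y = blockMax Q x := by rw [← h y, ← h x, hP]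
    exact (Q.mem_part_iff_part_eq_part (mem_univ y) (mem_univ x)).2
      ((blockMax_eq_blockMax_iff Q).1 hQ)

end BlockMax

lemma IsNonCrossing.blockMax_le_blockMax {n : ℕ} {P : Finpartition (univ : Finset (Fin n))}
    (hP : IsNonCrossing P) {x y : Fin n} (hxy : x ≤ y) (hy : y ≤ blockMax P x) :
    blockMax P y ≤ blockMax P x := by
  by_contra! hlt
  have hne : P.part x ≠ P.part y := fun h => hlt.ne ((blockMax_eq_blockMax_iff P).2 h)
  have hxy' : x ≠ y := fun h => hne (by rw [h])
  have hy' : y ≠ blockMax P x := fun h => hne (by rw [h, part_blockMax])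
  exact hP ⟨x, y, blockMax P x, blockMax P y, P.part x, P.part y, by simp, by simp, hne,
    hxy.lt_of_ne hxy', hy.lt_of_ne hy', hlt, by simp, blockMax_mem_part P x, by simp,
    blockMax_mem_part P y⟩

/-- The block-maximum map of a non-crossing partition of `{0, …, n - 1}`. It is extended by the
identity to all of `ℕ`, so that restricting, shifting and gluing are plain arithmetic. -/
@[ext]
structure BlockMaxMap (n : ℕ) where
  toFun : ℕ → ℕ
  apply_of_le : ∀ {x}, n ≤ x → toFun x = x
  le_apply : ∀ x, x ≤ toFun x
  apply_lt : ∀ {x}, x < n → toFun x < n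
  apply_le_apply : ∀ {x y}, x ≤ y → y ≤ toFun x → toFun y ≤ toFun x

namespace BlockMaxMap

variable {n j q p : ℕ}

instance : CoeFun (BlockMaxMap n) fun _ => ℕ → ℕ := ⟨toFun⟩

lemma apply_apply (m : BlockMaxMap n) (x : ℕ) : m (m x) = m x :=
  (m.apply_le_apply (m.le_apply x) le_rfl).antisymm (m.le_apply _)

/-- Refinement of partitions, expressed through block maxima as in `le_iff_blockMax_blockMax`. -/
instance : PartialOrder (BlockMaxMap n) where
  le m m' := ∀ x, m' (m x) = m' x
  le_refl := apply_apply
  le_trans m m' m'' h h' x := by rw [← h' (m x), h, h']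
  le_antisymm m m' h h' := by
    ext x
    exact le_antisymm ((m'.le_apply _).trans_eq (h x)) ((m.le_apply _).trans_eq (h' x))

lemma le_def {m m' : BlockMaxMap n} : m ≤ m' ↔ ∀ x, m' (m x) = m' x := Iff.rfl

instance : BoundedOrder (BlockMaxMap n) where
  bot := ⟨id, fun _ => rfl, fun _ => le_rfl, id, fun _ h => h⟩
  bot_le _ _ := rfl
  top := ⟨fun x => if x < n then n - 1 else x, by grind, by grind, by grind, by grind⟩
  le_top m x := by
    have := @m.apply_lt x
    have := @m.apply_of_le x
    change (if m x < n then n - 1 else m x) = if x < n then n - 1 else x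
    grind

lemma bot_apply (x : ℕ) : (⊥ : BlockMaxMap n) x = x := rfl

lemma top_apply (x : ℕ) : (⊤ : BlockMaxMap n) x = if x < n then n - 1 else x := rfl

lemma subsingleton_of_le_one (hn : n ≤ 1) : Subsingleton (BlockMaxMap n) := by
  refine ⟨fun m m' => BlockMaxMap.ext (funext fun x => ?_)⟩
  have := @m.apply_lt x
  have := @m'.apply_lt x
  have := @m.apply_of_le x
  have := @m'.apply_of_le x
  grind

section NonCrossing

open Classical in
/-- The partition of `{0, …, p - 1}` into the fibres of a block-maximum map. -/
noncomputable def toFinpartition (m : BlockMaxMap p) : Finpartition (univ : Finset (Fin p)) :=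
  Finpartition.ofSetoid (Setoid.ker fun x : Fin p => m x)

open Classical in
lemma mem_part_toFinpartition {m : BlockMaxMap p} {x y : Fin p} :
    y ∈ m.toFinpartition.part x ↔ m x = m y :=
  Finpartition.mem_part_ofSetoid_iff_rel

lemma isNonCrossing_toFinpartition (m : BlockMaxMap p) : IsNonCrossing m.toFinpartition := by
  rintro ⟨a, b, c, d, X, Y, hX, hY, hXY, hab, hbc, hcd, ha, hc, hb, hd⟩
  have hac : m a = m c := by rwa [← mem_part_toFinpartition, Finpartition.part_eq_of_mem _ hX ha]
  have hbd : m b = m d := by rwa [← mem_part_toFinpartition, Finpartition.part_eq_of_mem _ hY hb]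
  have hba : m b ≤ m a := m.apply_le_apply hab.le (hac ▸ (Fin.le_def.1 hbc.le).trans (m.le_apply c))
  have hcb : m c ≤ m b := m.apply_le_apply hbc.le (hbd ▸ (Fin.le_def.1 hcd.le).trans (m.le_apply d))
  have hbX : b ∈ X := by
    rw [← Finpartition.part_eq_of_mem _ hX ha, mem_part_toFinpartition]
    exact (hac.trans_le hcb).antisymm hba
  exact hXY (Finpartition.eq_of_mem_parts _ hX hY hbX hb)

lemma blockMax_toFinpartition (m : BlockMaxMap p) (x : Fin p) :
    ↑(blockMax m.toFinpartition x) = m x := by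
  apply le_antisymm
  · rw [mem_part_toFinpartition.1 (blockMax_mem_part _ x)]
    exact m.le_apply _
  · exact Fin.le_def.1 <| le_max' _ (⟨m x, m.apply_lt x.2⟩ : Fin p)
      (mem_part_toFinpartition.2 (m.apply_apply x).symm)

/-- The block-maximum map of a non-crossing partition. -/
def ofNCP (P : NCP p) : BlockMaxMap p where
  toFun x := if h : x < p then ↑(blockMax P.1 ⟨x, h⟩) else x
  apply_of_le := by grind
  le_apply x := by
    split_ifs with h
    · exact le_blockMax P.1 ⟨x, h⟩
    · rfl
  apply_lt := by grind
  apply_le_apply {x y} hxy hy := by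
    by_cases hx : x < p
    · rw [dif_pos hx] at hy ⊢
      have hyp : y < p := hy.trans_lt (Fin.is_lt _)
      rw [dif_pos hyp]
      exact P.2.blockMax_le_blockMax (x := ⟨x, hx⟩) (y := ⟨y, hyp⟩) hxy hy
    · grind

lemma ofNCP_apply (P : NCP p) (x : Fin p) : ofNCP P x = blockMax P.1 x := dif_pos x.2

lemma ofNCP_le_ofNCP_iff {P Q : NCP p} : ofNCP P ≤ ofNCP Q ↔ P ≤ Q := by
  rw [← Subtype.coe_le_coe, le_iff_blockMax_blockMax, le_def]
  constructor
  · intro h x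
    simpa only [ofNCP_apply, Fin.val_inj] using h x
  · intro h x
    by_cases hx : x < p
    · have hQP := congrArg Fin.val (h ⟨x, hx⟩)
      rwa [← ofNCP_apply, ← ofNCP_apply, ← ofNCP_apply] at hQP
    · rw [(ofNCP P).apply_of_le (not_lt.1 hx)]

lemma ofNCP_surjective : Function.Surjective (ofNCP (p := p)) := by
  intro m
  refine ⟨⟨_, m.isNonCrossing_toFinpartition⟩, BlockMaxMap.ext (funext fun x => ?_)⟩
  by_cases hx : x < p
  · exact (ofNCP_apply _ ⟨x, hx⟩).trans (m.blockMax_toFinpartition ⟨x, hx⟩)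
  · rw [apply_of_le _ (not_lt.1 hx), apply_of_le _ (not_lt.1 hx)]

/-- `NC(p)` is isomorphic to the poset of block-maximum maps. -/
noncomputable def ncpOrderIso (p : ℕ) : NCP p ≃o BlockMaxMap p :=
  .ofSurjective (.ofMapLEIff ofNCP fun _ _ => ofNCP_le_ofNCP_iff) ofNCP_surjective

instance : Finite (BlockMaxMap p) := .of_equiv _ (ncpOrderIso p).toEquiv

end NonCrossing

section Glue

lemma apply_last (m : BlockMaxMap (j + 1)) : m j = j := by
  have := m.le_apply j
  have := @m.apply_lt j
  omega

/-- The trace of a non-crossing partition of `{0, …, j + q}` on `{0, …, j}`. -/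
def initial : BoundedOrderHom (BlockMaxMap (j + q + 1)) (BlockMaxMap (j + 1)) where
  toFun m :=
    { toFun x := if x ≤ j then min (m x) j else x
      apply_of_le := by grind
      le_apply x := by grind [m.le_apply x]
      apply_lt := by grind
      apply_le_apply {x y} hxy hy := by
        have := @m.apply_le_apply x y
        grind }
  monotone' m m' h x := by
    have := h x
    have := m'.le_apply (m x)
    have := m'.le_apply j
    grind
  map_top' := by
    ext x
    change (if x ≤ j then min (if x < j + q + 1 then j + q else x) j else x) =
      if x < j + 1 then j else x
    grind
  map_bot' := by
    ext x
    change (if x ≤ j then min x j else x) = x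
    grind

lemma initial_apply (m : BlockMaxMap (j + q + 1)) (x : ℕ) :
    initial m x = if x ≤ j then min (m x) j else x := rfl

/-- The trace of a non-crossing partition of `{0, …, j + q}` on `{j + 1, …, j + q}`, shifted to
`{0, …, q - 1}`. -/
def final : BoundedOrderHom (BlockMaxMap (j + q + 1)) (BlockMaxMap q) where
  toFun m :=
    { toFun x := m (x + (j + 1)) - (j + 1)
      apply_of_le {x} hx := by rw [m.apply_of_le (by omega), Nat.add_sub_cancel]
      le_apply x := Nat.le_sub_of_add_le (m.le_apply _)
      apply_lt {x} hx := by
        have := @m.apply_lt (x + (j + 1))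
        omega
      apply_le_apply {x y} hxy hy := by
        have := @m.apply_le_apply (x + (j + 1)) (y + (j + 1))
        have := m.le_apply (x + (j + 1))
        omega }
  monotone' m m' h x := by
    change m' (m (x + (j + 1)) - (j + 1) + (j + 1)) - (j + 1) = m' (x + (j + 1)) - (j + 1)
    rw [Nat.sub_add_cancel ((Nat.le_add_left _ _).trans (m.le_apply _)), h]
  map_top' := by
    ext x
    change (if x + (j + 1) < j + q + 1 then j + q else x + (j + 1)) - (j + 1) =
      if x < q then q - 1 else x
    grind
  map_bot' := by
    ext x
    exact Nat.add_sub_cancel x (j + 1)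

lemma final_apply (m : BlockMaxMap (j + q + 1)) (x : ℕ) :
    final m x = m (x + (j + 1)) - (j + 1) := rfl

section

variable {join join' : Prop} [Decidable join] [Decidable join']

variable (join) in
/-- The non-crossing partition of `{0, …, j + q}` with trace `a` on `{0, …, j}` and `b` on
`{j + 1, …, j + q}`, in which the block of `j` is joined to the block of `j + q` if `join` holds,
and no other blocks are joined. -/
def glue (a : BlockMaxMap (j + 1)) (b : BlockMaxMap q) : BlockMaxMap (j + q + 1) where
  toFun x := if x ≤ j then if join ∧ a x = j then j + q else a x else b (x - (j + 1)) + (j + 1)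
  apply_of_le {x} hx := by
    have := @b.apply_of_le (x - (j + 1))
    split_ifs <;> omega
  le_apply x := by
    have := a.le_apply x
    have := b.le_apply (x - (j + 1))
    split_ifs <;> omega
  apply_lt {x} hx := by
    have := @a.apply_lt x
    have := @b.apply_lt (x - (j + 1))
    split_ifs <;> omega
  apply_le_apply {x y} hxy := by
    have := @a.apply_le_apply x y
    have := @a.apply_lt x
    have := @a.apply_lt y
    have := @b.apply_le_apply (x - (j + 1)) (y - (j + 1))
    have := @b.apply_lt (y - (j + 1))
    grind

lemma glue_apply (a : BlockMaxMap (j + 1)) (b : BlockMaxMap q) (x : ℕ) :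
    glue join a b x =
      if x ≤ j then if join ∧ a x = j then j + q else a x else b (x - (j + 1)) + (j + 1) := rfl

lemma glue_apply_of_le (a : BlockMaxMap (j + 1)) (b : BlockMaxMap q) {x : ℕ} (hx : x ≤ j) :
    glue join a b x = if join ∧ a x = j then j + q else a x := if_pos hx

lemma glue_apply_add (a : BlockMaxMap (j + 1)) (b : BlockMaxMap q) (x : ℕ) :
    glue join a b (x + (j + 1)) = b x + (j + 1) := by
  rw [glue_apply, if_neg (by omega), Nat.add_sub_cancel]

lemma glue_le_glue (hjoin : join → join') {a a' : BlockMaxMap (j + 1)} (ha : a ≤ a')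
    {b b' : BlockMaxMap q} (hb : b ≤ b') : glue join a b ≤ glue join' a' b' := by
  intro x
  obtain hx | ⟨x, rfl⟩ : x ≤ j ∨ ∃ y, x = y + (j + 1) :=
    (le_or_gt x j).imp_right fun h => ⟨x - (j + 1), by omega⟩
  · have hax : a x ≤ j := Nat.lt_succ_iff.1 (a.apply_lt (Nat.lt_succ_iff.2 hx))
    by_cases h : join ∧ a x = j
    · have ha'x : a' x = j := by rw [← ha x, h.2, a'.apply_last]
      rw [glue_apply_of_le a b hx, if_pos h, apply_last,
        glue_apply_of_le a' b' hx, if_pos ⟨hjoin h.1, ha'x⟩]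
    · rw [glue_apply_of_le a b hx, if_neg h, glue_apply_of_le a' b' hax,
        glue_apply_of_le a' b' hx, ha x]
  · rw [glue_apply_add, glue_apply_add, glue_apply_add, hb x]

lemma glue_bot_bot (hjoin : ¬join) :
    glue join (⊥ : BlockMaxMap (j + 1)) (⊥ : BlockMaxMap q) = ⊥ := by
  ext x
  simp only [glue_apply, bot_apply]
  grind

lemma glue_top_top (hjoin : join) :
    glue join (⊤ : BlockMaxMap (j + 1)) (⊤ : BlockMaxMap q) = ⊤ := by
  ext x
  simp only [glue_apply, top_apply]
  grind

lemma initial_glue (a : BlockMaxMap (j + 1)) (b : BlockMaxMap q) :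
    initial (glue join a b) = a := by
  ext x
  have := @a.apply_lt x
  have := @a.apply_of_le x
  simp only [initial_apply, glue_apply]
  grind

lemma final_glue (a : BlockMaxMap (j + 1)) (b : BlockMaxMap q) :
    final (glue join a b) = b := by
  ext x
  rw [final_apply, glue_apply_add, Nat.add_sub_cancel]

lemma glue_initial_final {m : BlockMaxMap (j + q + 1)} (hjoin : join → m j = j + q)
    (hsep : ¬join → ∀ x ≤ j, m x ≤ j) : glue join (initial m) (final m) = m := by
  ext x
  have := @m.apply_le_apply x j
  have := @m.apply_lt x
  have := m.le_apply x
  have := (hsep · x)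
  simp only [glue_apply, initial_apply, final_apply]
  grind

end

lemma apply_le_of_le {m m' : BlockMaxMap n} (h : m ≤ m') (hj : m' 0 = j) {x : ℕ} (hx : x ≤ j) :
    m x ≤ j := by
  subst hj
  calc m x ≤ m' (m x) := m'.le_apply _
    _ = m' x := h x
    _ ≤ m' 0 := m'.apply_le_apply (Nat.zero_le x) hx

end Glue

end BlockMaxMap

/-- A chain `⊥ = c 0 ≤ c 1 ≤ ⋯ ≤ c s ≤ c (s + 1) = ⊤` padded by `⊤`, so that the free terms are
`c 1, …, c s`. -/
@[ext]
structure PaddedChain (α : Type*) [Preorder α] [BoundedOrder α] (s : ℕ) where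
  toFun : ℕ → α
  monotone : Monotone toFun
  apply_zero : toFun 0 = ⊥
  apply_of_lt : ∀ {i}, s < i → toFun i = ⊤

namespace PaddedChain

variable {α β : Type*} [Preorder α] [BoundedOrder α] [Preorder β] [BoundedOrder β] {s : ℕ}

instance : CoeFun (PaddedChain α s) fun _ => ℕ → α := ⟨toFun⟩

/-- The image of a padded chain under a map preserving the order and its bounds. -/
def map (f : BoundedOrderHom α β) (c : PaddedChain α s) : PaddedChain β s where
  toFun i := f (c i)
  monotone := (OrderHomClass.mono f).comp c.monotone
  apply_zero := by rw [c.apply_zero, map_bot]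
  apply_of_lt h := by rw [c.apply_of_lt h, map_top]

variable (α s) in
/-- Padding an `s`-chain loses and adds no information. -/
def monotoneEquiv : {f : Fin s → α // Monotone f} ≃ PaddedChain α s where
  toFun f :=
    { toFun
        | 0 => ⊥
        | i + 1 => if h : i < s then f.1 ⟨i, h⟩ else ⊤
      monotone := monotone_nat_of_le_succ fun
        | 0 => bot_le
        | i + 1 => by
          dsimp only
          split_ifs
          · exact f.2 (Fin.mk_le_mk.2 i.le_succ)
          · exact le_top
          · omega
          · exact le_top
      apply_zero := rfl
      apply_of_lt {i} hi := by
        obtain ⟨i, rfl⟩ := Nat.exists_eq_add_one_of_ne_zero (Nat.ne_zero_of_lt hi)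
        exact dif_neg (by omega) }
  invFun c := ⟨fun i => c (i + 1), fun _ _ h => c.monotone (Nat.succ_le_succ h)⟩
  left_inv f := Subtype.ext (funext fun i => dif_pos i.2)
  right_inv c := by
    ext i
    rcases i with _ | i
    · exact c.apply_zero.symm
    · by_cases hi : i < s
      · exact dif_pos hi
      · exact (dif_neg hi).trans (c.apply_of_lt (by omega)).symm

instance [Finite α] : Finite (PaddedChain α s) := .of_equiv _ (monotoneEquiv α s)

lemma card_of_subsingleton [Subsingleton α] : Nat.card (PaddedChain α s) = 1 := by
  rw [← Nat.card_congr (monotoneEquiv α s), Nat.card_eq_one_iff_unique]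
  exact ⟨inferInstance, ⟨⟨fun _ => ⊥, monotone_const⟩⟩⟩

end PaddedChain

/-- The padded chains of non-crossing partitions of `{0, …, p}` for which `0` and `p` lie in the
same block at level `k`. -/
abbrev SpanningChain (s k p : ℕ) := {c : PaddedChain (BlockMaxMap (p + 1)) s // c k 0 = p}

section Split

open BlockMaxMap

variable {s k j q : ℕ}

/-- Gluing two padded chains, the block of the last point of the first being joined to that of the
last point of the second from level `k + 1` on. -/
def glueChain (hk : k ≤ s) (a : PaddedChain (BlockMaxMap (j + 1)) s)
    (b : PaddedChain (BlockMaxMap q) s) : PaddedChain (BlockMaxMap (j + q + 1)) s where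
  toFun i := glue (k < i) (a i) (b i)
  monotone _ _ h := glue_le_glue (fun hki => hki.trans_le h) (a.monotone h) (b.monotone h)
  apply_zero := by rw [a.apply_zero, b.apply_zero, glue_bot_bot (Nat.not_lt_zero k)]
  apply_of_lt h := by
    rw [a.apply_of_lt h, b.apply_of_lt h, glue_top_top (hk.trans_lt h)]

lemma glueChain_apply (hk : k ≤ s) (a : PaddedChain (BlockMaxMap (j + 1)) s)
    (b : PaddedChain (BlockMaxMap q) s) (i : ℕ) :
    glueChain hk a b i = glue (k < i) (a i) (b i) := rfl

lemma glueChain_self_apply_zero (hk : k ≤ s) {a : PaddedChain (BlockMaxMap (j + 1)) s}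
    (ha : a k 0 = j) (b : PaddedChain (BlockMaxMap q) s) : glueChain hk a b k 0 = j := by
  simp [glueChain_apply, glue_apply, ha]

lemma glueChain_succ_apply_zero (hk : k ≤ s) {a : PaddedChain (BlockMaxMap (j + 1)) s}
    (ha : a k 0 = j) (b : PaddedChain (BlockMaxMap q) s) :
    glueChain hk a b (k + 1) 0 = j + q := by
  have ha' : a (k + 1) 0 = j := by
    rw [← a.monotone k.le_succ 0, ha, apply_last]
  simp [glueChain_apply, glue_apply, ha']

lemma glueChain_initial_final (hk : k ≤ s) {c : PaddedChain (BlockMaxMap (j + q + 1)) s}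
    (hc : c (k + 1) 0 = j + q) (hc' : c k 0 = j) :
    glueChain hk (c.map initial) (c.map final) = c := by
  refine PaddedChain.ext (funext fun i => glue_initial_final (fun hi => ?_) fun hi x hx => ?_)
  · calc c i j = c i (c k 0) := by rw [hc']
      _ = c i 0 := c.monotone hi.le 0
      _ = c i (c (k + 1) 0) := (c.monotone (Nat.succ_le_of_lt hi) 0).symm
      _ = j + q := by rw [hc, apply_last]
  · exact apply_le_of_le (c.monotone (not_lt.1 hi)) hc' hx

/-- Cutting after the largest element `j` of the block of `0` at level `k`. -/
def splitEquiv (hk : k ≤ s) :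
    {c : PaddedChain (BlockMaxMap (j + q + 1)) s // c (k + 1) 0 = j + q ∧ c k 0 = j} ≃
      SpanningChain s k j × PaddedChain (BlockMaxMap q) s where
  toFun c := ⟨⟨c.1.map initial, by
    change min (c.1 k 0) j = j
    rw [c.2.2, min_self]⟩, c.1.map final⟩
  invFun ab := ⟨glueChain hk ab.1.1 ab.2, glueChain_succ_apply_zero hk ab.1.2 ab.2,
    glueChain_self_apply_zero hk ab.1.2 ab.2⟩
  left_inv c := Subtype.ext (glueChain_initial_final hk c.2.1 c.2.2)
  right_inv ab := Prod.ext
    (Subtype.ext (PaddedChain.ext (funext fun _ => initial_glue _ _)))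
    (PaddedChain.ext (funext fun _ => final_glue _ _))

lemma card_spanningChain_succ (hk : k ≤ s) (p : ℕ) :
    Nat.card (SpanningChain s (k + 1) p) = ∑ jq ∈ antidiagonal p,
      Nat.card (SpanningChain s k jq.1) * Nat.card (PaddedChain (BlockMaxMap jq.2) s) := by
  let cut (c : SpanningChain s (k + 1) p) : antidiagonal p :=
    ⟨(c.1 k 0, p - c.1 k 0), by
      have := (c.1 k).apply_lt p.succ_pos
      rw [HasAntidiagonal.mem_antidiagonal]
      omega⟩
  have card_fiber (jq : antidiagonal p) : Nat.card {c // cut c = jq} =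
      Nat.card (SpanningChain s k jq.1.1) * Nat.card (PaddedChain (BlockMaxMap jq.1.2) s) := by
    obtain ⟨⟨j, q⟩, hjq⟩ := jq
    obtain rfl : j + q = p := HasAntidiagonal.mem_antidiagonal.1 hjq
    have cut_eq_iff (c : SpanningChain s (k + 1) (j + q)) :
        cut c = ⟨(j, q), hjq⟩ ↔ c.1 k 0 = j := by
      simp only [cut, Subtype.mk.injEq, Prod.mk.injEq]
      omega
    rw [← Nat.card_prod, ← Nat.card_congr (splitEquiv hk)]
    exact Nat.card_congr ((Equiv.subtypeEquivRight cut_eq_iff).trans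
      (Equiv.subtypeSubtypeEquivSubtypeInter _
        fun c : PaddedChain (BlockMaxMap (j + q + 1)) s => c k 0 = j))
  calc Nat.card (SpanningChain s (k + 1) p)
      = ∑ jq : antidiagonal p, Nat.card {c // cut c = jq} := by
        rw [← Nat.card_sigma, Nat.card_congr (Equiv.sigmaFiberEquiv cut)]
    _ = _ := by
        simp only [card_fiber]
        exact sum_coe_sort (antidiagonal p) fun jq =>
          Nat.card (SpanningChain s k jq.1) * Nat.card (PaddedChain (BlockMaxMap jq.2) s)

end Split

lemma card_spanningChain_zero (s p : ℕ) :
    Nat.card (SpanningChain s 0 p) = if p = 0 then 1 else 0 := by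
  have zero_apply (c : PaddedChain (BlockMaxMap (p + 1)) s) : c 0 0 = 0 := by
    rw [c.apply_zero, BlockMaxMap.bot_apply]
  split_ifs with hp
  · subst hp
    have := BlockMaxMap.subsingleton_of_le_one (n := 0 + 1) le_rfl
    rw [Nat.card_congr (Equiv.subtypeUnivEquiv zero_apply), PaddedChain.card_of_subsingleton]
  · have : IsEmpty (SpanningChain s 0 p) := ⟨fun c => hp (c.2.symm.trans (zero_apply c.1))⟩
    exact Nat.card_of_isEmpty

lemma card_spanningChain_last (s p : ℕ) :
    Nat.card (SpanningChain s (s + 1) p) = Nat.card (PaddedChain (BlockMaxMap (p + 1)) s) := by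
  refine Nat.card_congr (Equiv.subtypeUnivEquiv fun c => ?_)
  rw [c.apply_of_lt s.lt_succ_self]
  simp [BlockMaxMap.top_apply]

section GeneratingFunction

open PowerSeries

/-- The generating function of the number of `s`-chains of non-crossing partitions of `[n]`. -/
noncomputable def chainSeries (s : ℕ) : ℕ⟦X⟧ :=
  .mk fun n => Nat.card (PaddedChain (BlockMaxMap n) s)

lemma constantCoeff_chainSeries (s : ℕ) : constantCoeff (chainSeries s) = 1 := by
  have := BlockMaxMap.subsingleton_of_le_one zero_le_one
  rw [← coeff_zero_eq_constantCoeff_apply, chainSeries, coeff_mk, PaddedChain.card_of_subsingleton]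

lemma chainSeries_pow {s k : ℕ} (hk : k ≤ s + 1) :
    chainSeries s ^ k = .mk fun n => Nat.card (SpanningChain s k n) := by
  induction k with
  | zero =>
    ext n
    rw [pow_zero, coeff_one, coeff_mk, card_spanningChain_zero]
  | succ k ih =>
    ext n
    rw [pow_succ, ih (by omega), coeff_mul, coeff_mk, card_spanningChain_succ (by omega)]
    simp only [chainSeries, coeff_mk]

lemma chainSeries_eq (s : ℕ) : chainSeries s = 1 + X * chainSeries s ^ (s + 1) := by
  ext (_ | n)
  · simp [constantCoeff_chainSeries]
  · rw [chainSeries_pow le_rfl, map_add, coeff_succ_X_mul, coeff_mk, card_spanningChain_last]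
    simp [chainSeries, coeff_one]

lemma choose_succ_eq_mul_choose (s n : ℕ) :
    ((n + 1) * s + n).choose (n + 1) = s * ((n + 1) * s + n).choose n := by
  refine Nat.eq_of_mul_eq_mul_right (Nat.add_one_pos n) ?_
  rw [Nat.choose_succ_right_eq, Nat.add_sub_cancel]
  ring

section Raney

variable {R : Type*} [CommSemiring R] {G : R⟦X⟧} {s : ℕ}

lemma coeff_zero_pow_of_eq_one_add (hG : G = 1 + X * G ^ (s + 1)) (r : ℕ) :
    coeff 0 (G ^ r) = 1 := by
  have hG0 : constantCoeff G = 1 := by rw [hG]; simp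
  simp [hG0]

lemma coeff_succ_pow_succ_of_eq_one_add (hG : G = 1 + X * G ^ (s + 1)) (r n : ℕ) :
    coeff (n + 1) (G ^ (r + 1)) = coeff (n + 1) (G ^ r) + coeff n (G ^ (r + s + 1)) := by
  have hpow : G ^ (r + 1) = G ^ r + X * G ^ (r + s + 1) := by
    calc G ^ (r + 1) = G ^ r * (1 + X * G ^ (s + 1)) := by rw [← hG, pow_succ]
      _ = G ^ r + X * G ^ (r + s + 1) := by ring
  rw [hpow, map_add, coeff_succ_X_mul]

-- The subtracted binomial coefficient is moved to the left, so that only Pascal's rule is needed.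
lemma coeff_succ_pow_add_of_eq_one_add (hG : G = 1 + X * G ^ (s + 1)) (n r : ℕ) :
    coeff (n + 1) (G ^ r) + s * ((n + 1) * s + n + r).choose n =
      ((n + 1) * s + n + r).choose (n + 1) := by
  induction n generalizing r with
  | zero =>
    induction r with
    | zero => simp [coeff_one]
    | succ r ihr =>
      rw [coeff_succ_pow_succ_of_eq_one_add hG, coeff_zero_pow_of_eq_one_add hG]
      simp only [Nat.choose_zero_right, zero_add, Nat.choose_one_right] at ihr ⊢
      push_cast at ihr ⊢
      calc coeff 1 (G ^ r) + 1 + s * 1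
          = coeff 1 (G ^ r) + s * 1 + 1 := by ring
        _ = 1 * s + 0 + (r + 1) := by rw [ihr, add_assoc]
  | succ n ih =>
    induction r with
    | zero => simp [coeff_one, choose_succ_eq_mul_choose]
    | succ r ihr =>
      have hn := ih (r + s + 1)
      rw [show (n + 1) * s + n + (r + s + 1) = (n + 1 + 1) * s + (n + 1) + r by ring] at hn
      rw [coeff_succ_pow_succ_of_eq_one_add hG, ← add_assoc]
      generalize (n + 1 + 1) * s + (n + 1) + r = N at ihr hn ⊢
      rw [Nat.choose_succ_succ', Nat.choose_succ_succ' N (n + 1)]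
      push_cast
      calc coeff (n + 1 + 1) (G ^ r) + coeff (n + 1) (G ^ (r + s + 1)) +
            s * (N.choose n + N.choose (n + 1))
          = (coeff (n + 1) (G ^ (r + s + 1)) + s * N.choose n) +
            (coeff (n + 1 + 1) (G ^ r) + s * N.choose (n + 1)) := by ring
        _ = N.choose (n + 1) + N.choose (n + 1 + 1) := by rw [hn, ihr]

end Raney

lemma mul_card_paddedChain (s p : ℕ) :
    (s * p + 1) * Nat.card (PaddedChain (BlockMaxMap p) s) = (s * p + p).choose p := by
  have hcoeff : coeff p (chainSeries s) = Nat.card (PaddedChain (BlockMaxMap p) s) := coeff_mk _ _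
  rw [← hcoeff, ← pow_one (chainSeries s)]
  rcases p with _ | n
  · simp [constantCoeff_chainSeries]
  · have hadd := coeff_succ_pow_add_of_eq_one_add (chainSeries_eq s) n 1
    have hchoose := Nat.choose_succ_right_eq (s * (n + 1) + (n + 1)) n
    rw [show s * (n + 1) + (n + 1) - n = s * (n + 1) + 1 by omega] at hchoose
    rw [show (n + 1) * s + n + 1 = s * (n + 1) + (n + 1) by ring] at hadd
    simp only [Nat.cast_id] at hadd
    zify at hadd hchoose ⊢
    linear_combination (s * (n + 1) + 1 : ℤ) * hadd + (s : ℤ) * hchoose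

end GeneratingFunction

lemma card_monotone_ncp (p s : ℕ) :
    Nat.card {f : Fin s → NCP p // Monotone f} = Nat.card (PaddedChain (BlockMaxMap p) s) := by
  let e := BlockMaxMap.ncpOrderIso p
  refine Nat.card_congr (.trans ?_ (PaddedChain.monotoneEquiv _ s))
  exact ((Equiv.refl (Fin s)).arrowCongr e.toEquiv).subtypeEquiv fun f =>
    ⟨e.monotone.comp, fun h _ _ hab => e.le_iff_le.1 (h hab)⟩

/-- **Fuss–Catalan numbers count chains in `NC(p)`.** For positive `p` and `s`, the number of
weakly increasing `s`-tuples of non-crossing partitions of `[p]` is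
`FC⁽ˢ⁾_p = (1/(sp+1)) * choose (sp+p) p`. -/
theorem fussCatalan_counts_chains (p s : ℕ) (hp : 0 < p) (hs : 0 < s) :
    (s * p + 1) * Nat.card {f : Fin s → NCP p // Monotone f} = Nat.choose (s * p + p) p := by
  rw [card_monotone_ncp, mul_card_paddedChain]
end

section
/- For positive integers s and p, the number of s-tuples (σ₁,...,σ_s) of non-crossing partitions of [p] forming a chain σ₁ ≤ σ₂ ≤ ... ≤ σ_s equals the number of (s+1)-tuples obtained by counting multichains in NC(p), and is given by the explicit product formula FC^(s)_p = ∏_{j=1}^{p-1} (sp + p + 1 − j)/(sp + 1 + j) · ... — equivalently FC^(s)_p = binomial((s+1)p, p)/(sp+1). In particular FC^(1)_p is the Catalan number and FC^(s)_1 = 1 for all s. -/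
open Equiv Finset MeasureTheory

/-!
A multichain `σ₀ ≤ ⋯ ≤ σ_{s-1}` of partitions is the same as a pseudo-ultrametric `d` with values in
`{0, …, s}`: the distance of two points is the number of partitions that separate them, and the
blocks of `σ_i` are the balls of radius `i`. The `σ_i` are non-crossing if and only if
`d x y ≤ max (d x z) (d y w)` for all `x < y < z < w`.

Consider the ultrametrics in which all points have distance at least `j` from the least point `a`,
and cut at the first point `b` at distance exactly `j` from `a`. By non-crossingness, the distances
between the two pieces are determined by those within the pieces. The points below `b` have
distance at least `j + 1` from `a`, and the points from `b` onwards carry an arbitrary ultrametric.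
So if `M` is the generating function of all ultrametrics, and `D j` that of the ultrametrics with
distances at least `j` from the least point of a nonempty set, which is not counted in the exponent,
then `D j = D (j + 1) * M` and `D (s + 1) = 1`. Hence `M = 1 + X * D 0 = 1 + X * M ^ (s + 1)`, the
functional equation of the Fuss–Catalan numbers.
-/

section FussCatalan

open PowerSeries

section Recursion

variable {R : Type*} [CommSemiring R] {s : ℕ} {F : PowerSeries R}

theorem constantCoeff_of_eq_one_add_X_mul {G : PowerSeries R} (hF : F = 1 + X * G) :
    constantCoeff F = 1 := by
  simp [hF]

theorem coeff_succ_pow_succ_of_eq_one_add_X_mul_pow (hF : F = 1 + X * F ^ (s + 1)) (n r : ℕ) :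
    coeff (n + 1) (F ^ (r + 1)) = coeff (n + 1) (F ^ r) + coeff n (F ^ (r + s + 1)) := by
  have expand : F ^ (r + 1) = F ^ r + X * F ^ (r + s + 1) := by
    calc F ^ (r + 1) = F ^ r * (1 + X * F ^ (s + 1)) := by rw [← hF, pow_succ]
      _ = F ^ r + X * F ^ (r + s + 1) := by ring
  rw [expand, map_add, coeff_succ_X_mul]

end Recursion

/-- The recursion `A(n + 1, r + 1) = A(n + 1, r) + A(n, r + s + 1)` of the Raney numbers
`A(n, r) = r / ((s + 1) n + r) * choose ((s + 1) n + r) n`, cleared of denominators. -/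
theorem raney_recursion {s n r N : ℕ} (hN : N = (s + 1) * (n + 1) + r) :
    (N + 1) * (r * N.choose (n + 1) + (r + s + 1) * N.choose n) =
      N * ((r + 1) * (N + 1).choose (n + 1)) := by
  have pascal : (N + 1).choose (n + 1) = N.choose n + N.choose (n + 1) := Nat.choose_succ_succ N n
  have absorb : N.choose (n + 1) * (n + 1) = N.choose n * (s * (n + 1) + r + 1) := by
    rw [Nat.choose_succ_right_eq]
    congr 1
    rw [hN, add_mul, one_mul]
    omega
  rw [pascal]
  zify at hN absorb ⊢
  linear_combination (s * N.choose n - N.choose (n + 1) : ℤ) * hN - (s + 1 : ℤ) * absorb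

variable {s : ℕ} {F : PowerSeries ℕ}

theorem mul_coeff_pow_of_eq_one_add_X_mul_pow (hF : F = 1 + X * F ^ (s + 1)) (n r : ℕ) :
    ((s + 1) * n + r) * coeff n (F ^ r) = r * ((s + 1) * n + r).choose n := by
  induction n generalizing r with
  | zero => simp [constantCoeff_of_eq_one_add_X_mul hF]
  | succ n ihn =>
    induction r with
    | zero => simp [coeff_one]
    | succ r ihr =>
      set N := (s + 1) * (n + 1) + r with hN
      have ihn' : N * coeff n (F ^ (r + s + 1)) = (r + s + 1) * N.choose n := by
        rw [hN, show (s + 1) * (n + 1) + r = (s + 1) * n + (r + s + 1) by ring]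
        exact ihn (r + s + 1)
      have hpos : 0 < N := by positivity
      refine Nat.eq_of_mul_eq_mul_left hpos ?_
      calc N * ((N + 1) * coeff (n + 1) (F ^ (r + 1)))
          = (N + 1) * (N * coeff (n + 1) (F ^ r) + N * coeff n (F ^ (r + s + 1))) := by
            rw [coeff_succ_pow_succ_of_eq_one_add_X_mul_pow hF]
            ring
        _ = N * ((r + 1) * (N + 1).choose (n + 1)) := by
            rw [ihr, ihn', raney_recursion hN]

theorem mul_coeff_of_eq_one_add_X_mul_pow (hF : F = 1 + X * F ^ (s + 1)) (n : ℕ) :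
    (s * n + 1) * coeff n F = ((s + 1) * n).choose n := by
  have hpow := mul_coeff_pow_of_eq_one_add_X_mul_pow hF n 1
  rw [pow_one, one_mul] at hpow
  have hchoose := Nat.choose_mul_succ_eq ((s + 1) * n) n
  have hsub : (s + 1) * n + 1 - n = s * n + 1 := by
    rw [add_mul, one_mul]
    omega
  rw [hsub, ← hpow] at hchoose
  refine Nat.eq_of_mul_eq_mul_left (Nat.succ_pos ((s + 1) * n)) ?_
  linarith

end FussCatalan

/-- A pseudo-ultrametric `d ≤ s` on an ordered type all of whose balls form non-crossing partitions.
It encodes a multichain `σ₀ ≤ ⋯ ≤ σ_{s-1}` of non-crossing partitions: `d x y` counts the members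
of the multichain that separate `x` and `y`, so that the blocks of `σ_i` are the balls of
radius `i`. -/
structure IsNonCrossingUltrametric {α : Type*} [LT α] (s : ℕ) (d : α → α → ℕ) : Prop where
  self (x : α) : d x x = 0
  comm (x y : α) : d x y = d y x
  triangle (x y z : α) : d x z ≤ max (d x y) (d y z)
  nonCrossing {x y z w : α} : x < y → y < z → z < w → d x y ≤ max (d x z) (d y w)
  le (x y : α) : d x y ≤ s

section Defs

variable {α : Type*} [LT α]

variable (α) in
/-- The set of non-crossing ultrametrics on `α` bounded by `s`, that is, of `s`-multichains of
non-crossing partitions of `α`. -/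
def nonCrossingUltrametrics (s : ℕ) : Set (α → α → ℕ) :=
  {d | IsNonCrossingUltrametric s d}

/-- The non-crossing ultrametrics for which every point above the root `a` is at distance at least
`j` from `a`. As `j` grows to `s + 1`, they decrease from all non-crossing ultrametrics to none, if
there is a point above `a`. -/
def rootedUltrametrics (s : ℕ) (a : α) (j : ℕ) : Set (α → α → ℕ) :=
  {d | IsNonCrossingUltrametric s d ∧ ∀ x, a < x → j ≤ d a x}

/-- The members of `rootedUltrametrics s a j` for which `b` is the first point above `a` at
distance exactly `j` from `a`. -/
def splitUltrametrics (s : ℕ) (a b : α) (j : ℕ) : Set (α → α → ℕ) :=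
  {d | d ∈ rootedUltrametrics s a j ∧ d a b = j ∧ ∀ x, a < x → x < b → j < d a x}

theorem rootedUltrametrics_subset (s : ℕ) (a : α) (j : ℕ) :
    rootedUltrametrics s a j ⊆ nonCrossingUltrametrics α s :=
  fun _ hd => hd.1

theorem rootedUltrametrics_zero (s : ℕ) (a : α) :
    rootedUltrametrics s a 0 = nonCrossingUltrametrics α s := by
  simp [rootedUltrametrics, nonCrossingUltrametrics]

theorem rootedUltrametrics_eq_of_forall_not_lt {a : α} (ha : ∀ x, ¬ a < x) (s j : ℕ) :
    rootedUltrametrics s a j = nonCrossingUltrametrics α s := by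
  simp [rootedUltrametrics, nonCrossingUltrametrics, ha]

theorem rootedUltrametrics_eq_empty_of_lt {s j : ℕ} {a b : α} (hab : a < b) (hj : s < j) :
    rootedUltrametrics s a j = ∅ :=
  Set.eq_empty_of_forall_notMem fun _ hd =>
    ((hd.2 b hab).trans (hd.1.le a b)).not_gt hj

variable (α) in
theorem ncard_nonCrossingUltrametrics_of_subsingleton [Subsingleton α] (s : ℕ) :
    (nonCrossingUltrametrics α s).ncard = 1 := by
  refine Set.ncard_eq_one.2 ⟨fun _ _ => 0, Set.eq_singleton_iff_unique_mem.2 ⟨?_, fun d hd => ?_⟩⟩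
  · exact ⟨fun _ => rfl, fun _ _ => rfl, fun _ _ _ => Nat.zero_le _,
      fun _ _ _ => Nat.zero_le _, fun _ _ => Nat.zero_le s⟩
  · funext x y
    rw [Subsingleton.elim y x, hd.self]

theorem finite_nonCrossingUltrametrics [Finite α] (s : ℕ) :
    (nonCrossingUltrametrics α s).Finite := by
  classical
  have := Fintype.ofFinite α
  exact (Set.finite_Iic fun _ _ : α => s).subset fun d hd x y => hd.le x y

theorem finite_rootedUltrametrics [Finite α] (s : ℕ) (a : α) (j : ℕ) :
    (rootedUltrametrics s a j).Finite :=
  (finite_nonCrossingUltrametrics s).subset (rootedUltrametrics_subset s a j)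

end Defs

section Transport

variable {α β : Type*} [Preorder α] [Preorder β] {s : ℕ}

theorem IsNonCrossingUltrametric.comp_strictMono {d : β → β → ℕ}
    (hd : IsNonCrossingUltrametric s d) {f : α → β} (hf : StrictMono f) :
    IsNonCrossingUltrametric s fun x y => d (f x) (f y) where
  self _ := hd.self _
  comm _ _ := hd.comm _ _
  triangle _ _ _ := hd.triangle _ _ _
  nonCrossing hxy hyz hzw := hd.nonCrossing (hf hxy) (hf hyz) (hf hzw)
  le _ _ := hd.le _ _

/-- Pull-back of two-variable functions along an order isomorphism. -/
def pullbackEquiv (e : α ≃o β) : (β → β → ℕ) ≃ (α → α → ℕ) :=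
  e.symm.toEquiv.arrowCongr (e.symm.toEquiv.arrowCongr (Equiv.refl ℕ))

theorem pullbackEquiv_apply (e : α ≃o β) (d : β → β → ℕ) (x y : α) :
    pullbackEquiv e d x y = d (e x) (e y) :=
  rfl

theorem isNonCrossingUltrametric_pullbackEquiv_iff (e : α ≃o β) {d : β → β → ℕ} :
    IsNonCrossingUltrametric s (pullbackEquiv e d) ↔ IsNonCrossingUltrametric s d := by
  refine ⟨fun hd => ?_, fun hd => hd.comp_strictMono e.strictMono⟩
  simpa [pullbackEquiv_apply] using hd.comp_strictMono e.symm.strictMono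

theorem ncard_nonCrossingUltrametrics_congr (e : α ≃o β) :
    (nonCrossingUltrametrics α s).ncard = (nonCrossingUltrametrics β s).ncard :=
  (Set.ncard_congr' <| (pullbackEquiv e).subtypeEquiv fun _ =>
    (isNonCrossingUltrametric_pullbackEquiv_iff e).symm).symm

theorem ncard_rootedUltrametrics_congr (e : α ≃o β) (a : α) (j : ℕ) :
    (rootedUltrametrics s a j).ncard = (rootedUltrametrics s (e a) j).ncard :=
  (Set.ncard_congr' <| (pullbackEquiv e).subtypeEquiv fun d => by
    simp [rootedUltrametrics, pullbackEquiv_apply, isNonCrossingUltrametric_pullbackEquiv_iff,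
      e.surjective.forall]).symm

theorem ncard_splitUltrametrics_congr (e : α ≃o β) (a b : α) (j : ℕ) :
    (splitUltrametrics s a b j).ncard = (splitUltrametrics s (e a) (e b) j).ncard :=
  (Set.ncard_congr' <| (pullbackEquiv e).subtypeEquiv fun d => by
    simp [splitUltrametrics, rootedUltrametrics, pullbackEquiv_apply,
      isNonCrossingUltrametric_pullbackEquiv_iff, e.surjective.forall]).symm

end Transport

section Split

variable {α : Type*} {s j : ℕ} {a b : α}

theorem rootedUltrametrics_eq_union [Preorder α] [WellFoundedLT α]
    [LocallyFiniteOrderTop α] (s : ℕ) (a : α) (j : ℕ) :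
    rootedUltrametrics s a j =
      rootedUltrametrics s a (j + 1) ∪ ⋃ b : Finset.Ioi a, splitUltrametrics s a b j := by
  ext d
  constructor
  · rintro ⟨hU, hroot⟩
    by_cases hex : ∃ x, a < x ∧ d a x = j
    · obtain ⟨b, ⟨hab, hb⟩, hmin⟩ :=
        WellFounded.has_min wellFounded_lt {x | a < x ∧ d a x = j} hex
      refine Or.inr (Set.mem_iUnion.2 ⟨⟨b, Finset.mem_Ioi.2 hab⟩, ⟨hU, hroot⟩, hb, ?_⟩)
      exact fun x hax hxb => (hroot x hax).lt_of_ne fun h => hmin x ⟨hax, h.symm⟩ hxb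
    · exact Or.inl ⟨hU, fun x hax => (hroot x hax).lt_of_ne fun h => hex ⟨x, hax, h.symm⟩⟩
  · rintro (⟨hU, hroot⟩ | hd)
    · exact ⟨hU, fun x hax => (Nat.le_succ j).trans (hroot x hax)⟩
    · obtain ⟨_, hd⟩ := Set.mem_iUnion.1 hd
      exact hd.1

theorem disjoint_rootedUltrametrics_splitUltrametrics [LT α] (hab : a < b) :
    Disjoint (rootedUltrametrics s a (j + 1)) (splitUltrametrics s a b j) :=
  Set.disjoint_left.2 fun _ hd hd' => (Nat.lt_of_succ_le (hd.2 b hab)).ne' hd'.2.1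

variable [LinearOrder α]

theorem dist_eq_max_of_mem_splitUltrametrics {d : α → α → ℕ}
    (hd : d ∈ splitUltrametrics s a b j) {x y : α} (hax : a ≤ x) (hxb : x < b) (hby : b ≤ y) :
    d x y = max j (max (d a x) (d b y)) := by
  obtain ⟨⟨hU, hroot⟩, hab, hfirst⟩ := hd
  have upper : d x y ≤ max j (max (d a x) (d b y)) := by
    have := hU.triangle x a y
    have := hU.triangle a b y
    have := hU.comm x a
    omega
  have root_far : j ≤ d a y := hroot y ((hax.trans_lt hxb).trans_le hby)
  have left_le : d a x ≤ d x y ∧ j ≤ d x y := by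
    obtain rfl | hax := hax.eq_or_lt
    · exact ⟨(hU.self a).trans_le (Nat.zero_le _), root_far⟩
    have hj := hfirst x hax hxb
    have : d a x ≤ max (d a b) (d x y) := by
      obtain rfl | hby := hby.eq_or_lt
      · exact (hU.comm x b) ▸ hU.triangle a b x
      · exact hU.nonCrossing hax hxb hby
    omega
  have := hU.triangle b a y
  have := hU.triangle a x y
  have := hU.comm b a
  omega

theorem disjoint_splitUltrametrics {b' : α} (hab : a < b) (hab' : a < b') (hne : b ≠ b') :
    Disjoint (splitUltrametrics s a b j) (splitUltrametrics s a b' j) := by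
  refine Set.disjoint_left.2 fun d hd hd' => ?_
  obtain hlt | hlt := hne.lt_or_gt
  · exact (hd'.2.2 b hab hlt).ne' hd.2.1
  · exact (hd.2.2 b' hab' hlt).ne' hd'.2.1

theorem ncard_rootedUltrametrics_eq_add_sum [Finite α] [LocallyFiniteOrderTop α]
    (s : ℕ) (a : α) (j : ℕ) :
    (rootedUltrametrics s a j).ncard =
      (rootedUltrametrics s a (j + 1)).ncard +
        ∑ b ∈ Finset.Ioi a, (splitUltrametrics s a b j).ncard := by
  have hfin : ∀ b, (splitUltrametrics s a b j).Finite := fun b =>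
    (finite_rootedUltrametrics s a j).subset fun _ hd => hd.1
  have hsplit : Pairwise fun b b' : Finset.Ioi a =>
      Disjoint (splitUltrametrics s a (b : α) j) (splitUltrametrics s a (b' : α) j) :=
    fun b b' hne => disjoint_splitUltrametrics (Finset.mem_Ioi.1 b.2) (Finset.mem_Ioi.1 b'.2)
      (Subtype.coe_ne_coe.2 hne)
  have hroot : Disjoint (rootedUltrametrics s a (j + 1))
      (⋃ b : Finset.Ioi a, splitUltrametrics s a (b : α) j) :=
    Set.disjoint_iUnion_right.2 fun b =>
      disjoint_rootedUltrametrics_splitUltrametrics (Finset.mem_Ioi.1 b.2)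
  have := fun b => (hfin b).to_subtype
  rw [rootedUltrametrics_eq_union, Set.ncard_union_eq hroot (finite_rootedUltrametrics _ _ _)
    (Set.finite_iUnion fun b => hfin b), ← Finset.sum_coe_sort, ← Nat.card_coe_set_eq (⋃ _, _),
    Nat.card_congr (Set.unionEqSigmaOfDisjoint hsplit), Nat.card_sigma]
  rfl

end Split

section Glue

variable {α β : Type*} {s j : ℕ} {a : α} {b : β}

/-- Glues distance functions on `α` and `β` to one on the ordered sum, by placing the roots `a` and
`b` at distance `j` from each other and joining the other points through the roots. -/
def glue (j : ℕ) (a : α) (b : β) (d : (α → α → ℕ) × (β → β → ℕ)) : α ⊕ₗ β → α ⊕ₗ β → ℕ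
  | .inl x, .inl y => d.1 x y
  | .inl x, .inr y => max j (max (d.1 a x) (d.2 b y))
  | .inr x, .inl y => max j (max (d.1 a y) (d.2 b x))
  | .inr x, .inr y => d.2 x y

variable {d₁ : α → α → ℕ} {d₂ : β → β → ℕ}

theorem glue_triangle [LT α] [LT β] (h₁ : IsNonCrossingUltrametric s d₁)
    (h₂ : IsNonCrossingUltrametric s d₂) (x y z : α ⊕ₗ β) :
    glue j a b (d₁, d₂) x z ≤ max (glue j a b (d₁, d₂) x y) (glue j a b (d₁, d₂) y z) := by
  have root₁ : ∀ x y, d₁ x y ≤ max (d₁ a x) (d₁ a y) := fun x y =>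
    h₁.comm x a ▸ h₁.triangle x a y
  have root₂ : ∀ x y, d₂ x y ≤ max (d₂ b x) (d₂ b y) := fun x y =>
    h₂.comm x b ▸ h₂.triangle x b y
  rcases x with x | x <;> rcases y with y | y <;> rcases z with z | z <;> simp only [glue]
  · exact h₁.triangle x y z
  · have := h₁.triangle a y x
    have := h₁.comm x y
    omega
  · have := root₁ x z
    omega
  · have := h₂.triangle b y z
    omega
  · have := h₁.triangle a y z
    omega
  · have := root₂ x z
    omega
  · have := h₂.triangle b y x
    have := h₂.comm x y
    omega
  · exact h₂.triangle x y z

section PartialOrder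

variable [PartialOrder α] [PartialOrder β]

theorem IsNonCrossingUltrametric.nonCrossing_of_isBot {d : α → α → ℕ}
    (hd : IsNonCrossingUltrametric s d) (ha : IsBot a) {x y z : α} (hxy : x < y) (hyz : y < z) :
    d a x ≤ max (d a y) (d x z) := by
  obtain rfl | hax := (ha x).eq_or_lt
  · simp [hd.self]
  · exact hd.nonCrossing hax hxy hyz

theorem glue_nonCrossing (h₁ : IsNonCrossingUltrametric s d₁)
    (h₂ : IsNonCrossingUltrametric s d₂) (ha : IsBot a) (hb : IsBot b) {x y z w : α ⊕ₗ β}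
    (hxy : x < y) (hyz : y < z) (hzw : z < w) :
    glue j a b (d₁, d₂) x y ≤ max (glue j a b (d₁, d₂) x z) (glue j a b (d₁, d₂) y w) := by
  have root₁ : ∀ x y, d₁ x y ≤ max (d₁ a x) (d₁ a y) := fun x y =>
    h₁.comm x a ▸ h₁.triangle x a y
  rcases x with x | x <;> rcases y with y | y <;> rcases z with z | z <;> rcases w with w | w <;>
    -- As `inr _ < inl _` is impossible, only five of the sixteen patterns survive.
    first
    | exact absurd hxy Sum.Lex.not_inr_lt_inl
    | exact absurd hyz Sum.Lex.not_inr_lt_inl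
    | exact absurd hzw Sum.Lex.not_inr_lt_inl
    | simp only [glue]
  · exact h₁.nonCrossing (Sum.Lex.inl_lt_inl_iff.1 hxy) (Sum.Lex.inl_lt_inl_iff.1 hyz)
      (Sum.Lex.inl_lt_inl_iff.1 hzw)
  · have := h₁.nonCrossing_of_isBot ha (Sum.Lex.inl_lt_inl_iff.1 hxy) (Sum.Lex.inl_lt_inl_iff.1 hyz)
    have := root₁ x y
    omega
  · have := root₁ x y
    omega
  · have := h₂.nonCrossing_of_isBot hb (Sum.Lex.inr_lt_inr_iff.1 hyz) (Sum.Lex.inr_lt_inr_iff.1 hzw)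
    omega
  · exact h₂.nonCrossing (Sum.Lex.inr_lt_inr_iff.1 hxy) (Sum.Lex.inr_lt_inr_iff.1 hyz)
      (Sum.Lex.inr_lt_inr_iff.1 hzw)

theorem isNonCrossingUltrametric_glue (h₁ : IsNonCrossingUltrametric s d₁)
    (h₂ : IsNonCrossingUltrametric s d₂) (ha : IsBot a) (hb : IsBot b) (hj : j ≤ s) :
    IsNonCrossingUltrametric s (glue j a b (d₁, d₂)) where
  self
    | .inl x => h₁.self x
    | .inr x => h₂.self x
  comm
    | .inl x, .inl y => h₁.comm x y
    | .inl _, .inr _ => rfl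
    | .inr _, .inl _ => rfl
    | .inr x, .inr y => h₂.comm x y
  triangle := glue_triangle h₁ h₂
  nonCrossing := glue_nonCrossing h₁ h₂ ha hb
  le
    | .inl x, .inl y => h₁.le x y
    | .inl x, .inr y => max_le hj (max_le (h₁.le a x) (h₂.le b y))
    | .inr x, .inl y => max_le hj (max_le (h₁.le a y) (h₂.le b x))
    | .inr x, .inr y => h₂.le x y

theorem glue_mem_splitUltrametrics (h₁ : d₁ ∈ rootedUltrametrics s a (j + 1))
    (h₂ : d₂ ∈ nonCrossingUltrametrics β s) (ha : IsBot a) (hb : IsBot b) (hj : j ≤ s) :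
    glue j a b (d₁, d₂) ∈ splitUltrametrics s (Sum.inlₗ a) (Sum.inrₗ b) j := by
  have hfirst : ∀ x, a < x → j < d₁ a x := h₁.2
  refine ⟨⟨isNonCrossingUltrametric_glue h₁.1 h₂ ha hb hj, ?_⟩, ?_, ?_⟩
  · rintro (x | x) hax
    · exact (hfirst x (Sum.Lex.inl_lt_inl_iff.1 hax)).le
    · exact le_max_left _ _
  · change max j (max (d₁ a a) (d₂ b b)) = j
    simp [h₁.1.self, h₂.self]
  · rintro (x | x) hax hxb
    · exact hfirst x (Sum.Lex.inl_lt_inl_iff.1 hax)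
    · exact absurd (Sum.Lex.inr_lt_inr_iff.1 hxb) (hb x).not_gt

end PartialOrder

variable [LinearOrder α] [LinearOrder β]

theorem glue_restrict_of_mem_splitUltrametrics {d : α ⊕ₗ β → α ⊕ₗ β → ℕ}
    (hd : d ∈ splitUltrametrics s (Sum.inlₗ a) (Sum.inrₗ b) j) (ha : IsBot a) (hb : IsBot b) :
    glue j a b (fun x y => d (Sum.inlₗ x) (Sum.inlₗ y), fun x y => d (Sum.inrₗ x) (Sum.inrₗ y)) =
      d := by
  have cross : ∀ x y, d (Sum.inlₗ x) (Sum.inrₗ y) =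
      max j (max (d (Sum.inlₗ a) (Sum.inlₗ x)) (d (Sum.inrₗ b) (Sum.inrₗ y))) := fun x y =>
    dist_eq_max_of_mem_splitUltrametrics hd (Sum.Lex.inl_le_inl_iff.2 (ha x))
      (Sum.Lex.inl_lt_inr x b) (Sum.Lex.inr_le_inr_iff.2 (hb y))
  funext x y
  rcases x with x | x <;> rcases y with y | y
  · rfl
  · exact (cross x y).symm
  · exact (cross y x).symm.trans (hd.1.1.comm _ _)
  · rfl

theorem bijOn_glue (ha : IsBot a) (hb : IsBot b) (hj : j ≤ s) :
    Set.BijOn (glue j a b) (rootedUltrametrics s a (j + 1) ×ˢ nonCrossingUltrametrics β s)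
      (splitUltrametrics s (Sum.inlₗ a) (Sum.inrₗ b) j) := by
  refine ⟨fun d hd => glue_mem_splitUltrametrics hd.1 hd.2 ha hb hj, fun d _ d' _ h => ?_,
    fun d hd => ⟨(fun x y => d (Sum.inlₗ x) (Sum.inlₗ y), fun x y => d (Sum.inrₗ x) (Sum.inrₗ y)),
      ⟨⟨?_, ?_⟩, ?_⟩, glue_restrict_of_mem_splitUltrametrics hd ha hb⟩⟩
  · refine Prod.ext ?_ ?_ <;> funext x y
    · exact congrFun₂ h (Sum.inlₗ x) (Sum.inlₗ y)
    · exact congrFun₂ h (Sum.inrₗ x) (Sum.inrₗ y)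
  · exact hd.1.1.comp_strictMono Sum.Lex.inl_strictMono
  · exact fun x hax => hd.2.2 _ (Sum.Lex.inl_lt_inl_iff.2 hax) (Sum.Lex.inl_lt_inr x b)
  · exact hd.1.1.comp_strictMono Sum.Lex.inr_strictMono

theorem ncard_splitUltrametrics_sumLex (ha : IsBot a) (hb : IsBot b) (hj : j ≤ s) :
    (splitUltrametrics s (Sum.inlₗ a) (Sum.inrₗ b) j).ncard =
      (rootedUltrametrics s a (j + 1)).ncard * (nonCrossingUltrametrics β s).ncard := by
  rw [← (bijOn_glue ha hb hj).ncard_eq, Set.ncard_prod]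

end Glue

section GeneratingFunctions

open PowerSeries

variable (s : ℕ)

/-- The generating function of the number of `s`-multichains of non-crossing partitions of `n`
points. -/
noncomputable def multichainSeries : PowerSeries ℕ :=
  mk fun n => (nonCrossingUltrametrics (Fin n) s).ncard

/-- The generating function of the number of elements of `rootedUltrametrics s 0 j` on `n + 1`
points. -/
noncomputable def rootedSeries (j : ℕ) : PowerSeries ℕ :=
  mk fun n => (rootedUltrametrics s (0 : Fin (n + 1)) j).ncard

variable {s}

theorem ncard_splitUltrametrics_fin {n j : ℕ} (hj : j ≤ s) (i : Fin n) :
    (splitUltrametrics s (0 : Fin (n + 1)) i.succ j).ncard =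
      (rootedUltrametrics s (0 : Fin (i + 1)) (j + 1)).ncard *
        (nonCrossingUltrametrics (Fin (n - i)) s).ncard := by
  let lower : Fin (i + 1) ≃o Set.Iio i.succ :=
    Fintype.orderIsoFinOfCardEq _ (by simp)
  let upper : Fin (n - i) ≃o Set.Ici i.succ :=
    Fintype.orderIsoFinOfCardEq _ (by simp)
  let zero : Set.Iio i.succ := ⟨0, i.succ_pos⟩
  have zero_isBot : IsBot zero := fun x => Fin.zero_le x.1
  have lower_zero : lower 0 = zero :=
    le_antisymm (lower.le_symm_apply.1 (Fin.zero_le _)) (zero_isBot _)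
  rw [ncard_splitUltrametrics_congr (OrderIso.sumLexIioIci i.succ).symm,
    OrderIso.sumLexIioIci_symm_apply_of_lt i.succ_pos,
    OrderIso.sumLexIioIci_symm_apply_of_ge le_rfl,
    ncard_nonCrossingUltrametrics_congr upper, ncard_rootedUltrametrics_congr lower, lower_zero]
  exact ncard_splitUltrametrics_sumLex zero_isBot (fun x => x.2) hj

theorem rootedSeries_eq_mul {j : ℕ} (hj : j ≤ s) :
    rootedSeries s j = rootedSeries s (j + 1) * multichainSeries s := by
  ext n
  have split_card : ∑ b ∈ Finset.Ioi (0 : Fin (n + 1)), (splitUltrametrics s 0 b j).ncard =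
      ∑ i ∈ Finset.range n, (rootedUltrametrics s (0 : Fin (i + 1)) (j + 1)).ncard *
        (nonCrossingUltrametrics (Fin (n - i)) s).ncard := by
    rw [Fin.sum_Ioi_zero, Finset.sum_range]
    exact Finset.sum_congr rfl fun i _ => ncard_splitUltrametrics_fin hj i
  rw [coeff_mul, Finset.Nat.sum_antidiagonal_eq_sum_range_succ_mk, Finset.sum_range_succ]
  simp only [rootedSeries, multichainSeries, coeff_mk, Nat.sub_self,
    ncard_nonCrossingUltrametrics_of_subsingleton, mul_one]
  rw [ncard_rootedUltrametrics_eq_add_sum, split_card, add_comm]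

theorem rootedSeries_top : rootedSeries s (s + 1) = 1 := by
  ext n
  rw [rootedSeries, coeff_mk, coeff_one]
  rcases n with _ | n
  · rw [if_pos rfl, rootedUltrametrics_eq_of_forall_not_lt (by simp)]
    exact ncard_nonCrossingUltrametrics_of_subsingleton (Fin 1) s
  · rw [if_neg n.succ_ne_zero, rootedUltrametrics_eq_empty_of_lt Fin.zero_lt_one s.lt_succ_self,
      Set.ncard_empty]

theorem rootedSeries_eq_pow {j : ℕ} (hj : j ≤ s + 1) :
    rootedSeries s j = multichainSeries s ^ (s + 1 - j) := by
  induction hj using Nat.decreasingInduction with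
  | self => rw [rootedSeries_top, Nat.sub_self, pow_zero]
  | of_succ j hj ih =>
    rw [rootedSeries_eq_mul (Nat.lt_succ_iff.1 hj), ih, ← pow_succ]
    congr 1
    omega

theorem multichainSeries_eq (s : ℕ) :
    multichainSeries s = 1 + X * multichainSeries s ^ (s + 1) := by
  have rooted_zero : rootedSeries s 0 = multichainSeries s ^ (s + 1) :=
    rootedSeries_eq_pow (Nat.zero_le _)
  rw [← rooted_zero]
  ext n
  cases n with
  | zero => simp [multichainSeries, ncard_nonCrossingUltrametrics_of_subsingleton]
  | succ n =>
    simp [multichainSeries, rootedSeries, rootedUltrametrics_zero, coeff_succ_X_mul, coeff_one]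

end GeneratingFunctions

section Partitions

theorem finpartition_le_iff_forall_mem_part {α : Type*} [DecidableEq α] {t : Finset α}
    {P Q : Finpartition t} :
    P ≤ Q ↔ ∀ x y, x ∈ P.part y → x ∈ Q.part y := by
  constructor
  · intro hPQ x y hxy
    obtain ⟨B, hB, hx, hy⟩ := P.mem_part_iff_exists.1 hxy
    obtain ⟨C, hC, hBC⟩ := hPQ hB
    exact Q.mem_part_iff_exists.2 ⟨C, hC, hBC hx, hBC hy⟩
  · intro h B hB
    obtain ⟨y, hy⟩ := P.nonempty_of_mem_parts hB
    exact ⟨Q.part y, Q.part_mem.2 (P.le hB hy), fun x hx =>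
      h x y (P.mem_part_iff_exists.2 ⟨B, hB, hx, hy⟩)⟩

theorem isNonCrossing_iff {n : ℕ} {P : Finpartition (univ : Finset (Fin n))} :
    IsNonCrossing P ↔ ∀ ⦃x y z w⦄, x < y → y < z → z < w → x ∈ P.part z → y ∈ P.part w →
      x ∈ P.part y := by
  constructor
  · intro hP x y z w hxy hyz hzw hxz hyw
    obtain ⟨B, hB, hx, hz⟩ := P.mem_part_iff_exists.1 hxz
    obtain ⟨C, hC, hy, hw⟩ := P.mem_part_iff_exists.1 hyw
    by_contra hne
    refine hP ⟨x, y, z, w, B, C, hB, hC, ?_, hxy, hyz, hzw, hx, hz, hy, hw⟩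
    rintro rfl
    exact hne (P.mem_part_iff_exists.2 ⟨B, hB, hx, hy⟩)
  · rintro h ⟨x, y, z, w, B, C, hB, hC, hBC, hxy, hyz, hzw, hx, hz, hy, hw⟩
    have hmem : x ∈ P.part y := h hxy hyz hzw (P.mem_part_iff_exists.2 ⟨B, hB, hx, hz⟩)
      (P.mem_part_iff_exists.2 ⟨C, hC, hy, hw⟩)
    rw [P.part_eq_of_mem hC hy] at hmem
    exact hBC (P.eq_of_mem_parts hB hC hx hmem)

theorem apply_iff_card_not_le {s : ℕ} {p : Fin s → Prop} [DecidablePred p] (hp : Monotone p)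
    (i : Fin s) : p i ↔ #{k | ¬ p k} ≤ i := by
  constructor
  · intro hi
    rw [← Fin.card_Iio i]
    exact card_le_card fun k hk => mem_Iio.2 <| lt_of_not_ge fun hik =>
      (mem_filter.1 hk).2 (hp hik hi)
  · contrapose!
    intro hi
    rw [← Nat.add_one_le_iff, ← Fin.card_Iic i]
    exact card_le_card fun k hk => mem_filter.2
      ⟨mem_univ k, fun hk' => hi (hp (mem_Iic.1 hk) hk')⟩

theorem le_of_forall_fin_le {s m n : ℕ} (hm : m ≤ s) (h : ∀ i : Fin s, n ≤ i → m ≤ i) :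
    m ≤ n := by
  by_contra! hlt
  exact hlt.not_ge (h ⟨n, hlt.trans_le hm⟩ le_rfl)

namespace IsNonCrossingUltrametric

variable {α : Type*} [LT α] {s : ℕ} {d : α → α → ℕ}

/-- The equivalence relation whose classes are the balls of radius `i` of an ultrametric. -/
def ballSetoid (hd : IsNonCrossingUltrametric s d) (i : ℕ) : Setoid α where
  r x y := d x y ≤ i
  iseqv :=
    { refl x := (hd.self x).trans_le (Nat.zero_le i)
      symm {x y} hxy := (hd.comm y x).trans_le hxy
      trans {x y z} hxy hyz := (hd.triangle x y z).trans (max_le hxy hyz) }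

instance (hd : IsNonCrossingUltrametric s d) (i : ℕ) :
    DecidableRel (hd.ballSetoid i).r :=
  fun x y => Nat.decLe (d x y) i

/-- The partition into the balls of radius `i`, which is the `i`-th member of the multichain encoded
by an ultrametric. -/
def ballPartition [Fintype α] [DecidableEq α]
    (hd : IsNonCrossingUltrametric s d) (i : ℕ) : Finpartition (univ : Finset α) :=
  Finpartition.ofSetoid (hd.ballSetoid i)

theorem mem_part_ballPartition_iff [Fintype α] [DecidableEq α]
    (hd : IsNonCrossingUltrametric s d) (i : ℕ) (x y : α) :
    x ∈ (hd.ballPartition i).part y ↔ d x y ≤ i := by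
  rw [hd.comm]
  exact Finpartition.mem_part_ofSetoid_iff_rel

theorem isNonCrossing_ballPartition {n : ℕ} {d : Fin n → Fin n → ℕ}
    (hd : IsNonCrossingUltrametric s d) (i : ℕ) : IsNonCrossing (hd.ballPartition i) := by
  simp only [isNonCrossing_iff, hd.mem_part_ballPartition_iff]
  exact fun x y z w hxy hyz hzw hxz hyw => (hd.nonCrossing hxy hyz hzw).trans (max_le hxz hyw)

theorem monotone_ballPartition [Fintype α] [DecidableEq α]
    (hd : IsNonCrossingUltrametric s d) : Monotone hd.ballPartition := by
  intro i k hik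
  simp only [finpartition_le_iff_forall_mem_part, hd.mem_part_ballPartition_iff]
  exact fun x y hxy => hxy.trans hik

end IsNonCrossingUltrametric

variable {α : Type*} [Fintype α] [DecidableEq α] {s : ℕ}

/-- The number of members of a chain of partitions that separate `x` and `y`. -/
def separation (P : Fin s → Finpartition (univ : Finset α)) (x y : α) : ℕ :=
  #{i | x ∉ (P i).part y}

theorem mem_part_iff_separation_le {P : Fin s → Finpartition (univ : Finset α)}
    (hP : Monotone P) (i : Fin s) (x y : α) :
    x ∈ (P i).part y ↔ separation P x y ≤ i :=
  apply_iff_card_not_le (p := fun i => x ∈ (P i).part y)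
    (fun _ _ hij => finpartition_le_iff_forall_mem_part.1 (hP hij) x y) i

theorem separation_le (P : Fin s → Finpartition (univ : Finset α)) (x y : α) :
    separation P x y ≤ s :=
  (card_filter_le _ _).trans_eq (card_fin s)

theorem isNonCrossingUltrametric_separation {n : ℕ}
    {P : Fin s → Finpartition (univ : Finset (Fin n))} (hP : Monotone P)
    (hnc : ∀ i, IsNonCrossing (P i)) : IsNonCrossingUltrametric s (separation P) where
  self x := by simp [separation]
  comm x y := by simp [separation, Finpartition.mem_part_iff_part_eq_part, eq_comm]
  triangle x y z := by
    refine le_of_forall_fin_le (separation_le P x z) fun i hi => ?_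
    obtain ⟨hxy, hyz⟩ := max_le_iff.1 hi
    rw [← mem_part_iff_separation_le hP,
      Finpartition.mem_part_iff_part_eq_part _ (mem_univ _) (mem_univ _)] at hxy hyz ⊢
    exact hxy.trans hyz
  nonCrossing {x y z w} hxy hyz hzw := by
    refine le_of_forall_fin_le (separation_le P x y) fun i hi => ?_
    obtain ⟨hxz, hyw⟩ := max_le_iff.1 hi
    rw [← mem_part_iff_separation_le hP] at hxz hyw ⊢
    exact isNonCrossing_iff.1 (hnc i) hxy hyz hzw hxz hyw
  le := separation_le P

theorem IsNonCrossingUltrametric.separation_ballPartition [LT α] {d : α → α → ℕ}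
    (hd : IsNonCrossingUltrametric s d) :
    separation (fun i : Fin s => hd.ballPartition i) = d := by
  funext x y
  simp [separation, hd.mem_part_ballPartition_iff, Fin.card_filter_val_lt, hd.le x y]

theorem ballPartition_separation {P : Fin s → Finpartition (univ : Finset α)} [LT α]
    (hP : Monotone P) (hd : IsNonCrossingUltrametric s (separation P)) (i : Fin s) :
    hd.ballPartition i = P i := by
  apply le_antisymm <;>
    simp [finpartition_le_iff_forall_mem_part, hd.mem_part_ballPartition_iff,
      mem_part_iff_separation_le hP]

/-- Multichains in `NCP n` correspond to non-crossing ultrametrics. -/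
def multichainEquiv (n s : ℕ) :
    {f : Fin s → NCP n // Monotone f} ≃ nonCrossingUltrametrics (Fin n) s where
  toFun f := ⟨separation fun i => (f.1 i).1,
    isNonCrossingUltrametric_separation f.2 fun i => (f.1 i).2⟩
  invFun d := ⟨fun i => ⟨d.2.ballPartition i, d.2.isNonCrossing_ballPartition i⟩,
    fun _ _ hik => d.2.monotone_ballPartition hik⟩
  left_inv f := Subtype.ext <| funext fun i => Subtype.ext <|
    ballPartition_separation (P := fun i => (f.1 i).1) f.2 _ i
  right_inv d := Subtype.ext d.2.separation_ballPartition

end Partitions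

/-- The number of `s`-multichains (weakly increasing `s`-tuples) in `NC(p)` is
`FC⁽ˢ⁾_p = choose ((s+1)p) p / (sp+1)`; in particular `FC⁽¹⁾_p` is the Catalan number and
`FC⁽ˢ⁾_1 = 1` for all `s`. -/
theorem multichain_count (p s : ℕ) (hp : 0 < p) (hs : 0 < s) :
    (s * p + 1) * Nat.card {f : Fin s → NCP p // Monotone f} = Nat.choose ((s + 1) * p) p ∧
    Nat.choose (2 * p) p = (p + 1) * catalan p ∧
    Nat.choose ((s + 1) * 1) 1 = (s * 1 + 1) * 1 := by
  refine ⟨?_, (succ_mul_catalan_eq_centralBinom p).symm, by simp⟩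
  have card_eq : Nat.card {f : Fin s → NCP p // Monotone f} =
      PowerSeries.coeff p (multichainSeries s) := by
    rw [Nat.card_congr (multichainEquiv p s), Nat.card_coe_set_eq, multichainSeries,
      PowerSeries.coeff_mk]
  rw [card_eq]
  exact mul_coeff_of_eq_one_add_X_mul_pow (multichainSeries_eq s) p
end
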